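/- Let α > -1 and 0 < p < ∞ with p = α + 2. Then the norm of the point evaluation functional δ_z on the weighted Dirichlet space D^p_α satisfies ‖δ_z‖ ≍ (log(2/(1-|z|²)))^{(p-1)/p}, i.e., there exist constants c, C > 0 independent of z ∈ 𝔻 such that c·(log(2/(1-|z|²)))^{(p-1)/p} ≤ sup{|f(z)| : f ∈ D^p_α, ‖f‖_{D^p_α} ≤ 1} ≤ C·(log(2/(1-|z|²)))^{(p-1)/p} for all z ∈ 𝔻. -/

import Mathlib

open MeasureTheory Metric Set Filter Topology ENNReal

noncomputable section

/-- The open unit disk in ℂ. -/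
def unitDisk : Set ℂ := Metric.ball (0 : ℂ) 1

/-- The normalized Lebesgue area measure `dA = (1/π) dx dy` on ℂ. -/
def areaMeasure : Measure ℂ := (ENNReal.ofReal (Real.pi)⁻¹) • (volume : Measure ℂ)

/-- `∫_𝔻 |f'(z)|^p (1-|z|²)^α dA(z)`, as an extended nonnegative real. -/
def dirichletLintegral (p α : ℝ) (f : ℂ → ℂ) : ℝ≥0∞ :=
  ∫⁻ z in unitDisk, ENNReal.ofReal (‖deriv f z‖ ^ p * (1 - ‖z‖ ^ 2) ^ α) ∂areaMeasure

/-- Membership in the weighted Dirichlet space `D^p_α`: analytic on 𝔻 with finite norm. -/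
def MemDirichlet (p α : ℝ) (f : ℂ → ℂ) : Prop :=
  DifferentiableOn ℂ f unitDisk ∧ dirichletLintegral p α f < ⊤

/-- The norm of the weighted Dirichlet space `D^p_α`:
`(|f(0)|^p + ∫_𝔻 |f'(z)|^p (1-|z|²)^α dA(z))^{1/p}`. -/
def dirichletNorm (p α : ℝ) (f : ℂ → ℂ) : ℝ :=
  (‖f 0‖ ^ p + (dirichletLintegral p α f).toReal) ^ (1 / p)

/-!
For the upper bound, integrate `f'` along the radius ending at `z = ‖z‖ * u`. Hölder's inequality
with the weight `(1 - s) ^ (p - 1)` produces `log (1 / (1 - ‖z‖)) ^ ((p - 1) / p)` times the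
`p`-th root of `∫ (1 - s) ^ (p - 1) * ‖f' (s * u)‖ ^ p ds`. The mean value inequality on the disk of
radius `(1 - s) / 2` about `s * u` bounds this radial integral by the Dirichlet integral: a point
`w` lies in such disks only for `s` in an interval of length comparable to `1 - ‖w‖`.

For the lower bound, test with `w ↦ log (2 / (1 - conj z * w))`, whose value at `z` is
`log (2 / (1 - ‖z‖ ^ 2))`. By the Forelli-Rudin estimate in the critical case, the `p`-th power of
its norm is also at most a constant times this logarithm.
-/

open scoped Real ComplexConjugate

section Integrals

lemma rpow_le_rpow_abs_mul_rpow {c t x : ℝ} (e : ℝ) (hc : 0 < c) (hx : 0 < x)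
    (hxt : x / c ≤ t) (htx : t ≤ c * x) : t ^ e ≤ c ^ |e| * x ^ e := by
  rcases le_or_gt 0 e with he | he
  · rw [abs_of_nonneg he, ← Real.mul_rpow hc.le hx.le]
    exact Real.rpow_le_rpow ((by positivity : 0 ≤ x / c).trans hxt) htx he
  · rw [abs_of_neg he, Real.rpow_neg hc.le, ← Real.inv_rpow hc.le,
      ← Real.mul_rpow (by positivity) hx.le, inv_mul_eq_div]
    exact Real.rpow_le_rpow_of_nonpos (by positivity) hxt he.le

lemma rpow_lintegral_le {X : Type*} [MeasurableSpace X] {μ : Measure X} {f : X → ℝ≥0∞}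
    {p : ℝ} (hp : 1 ≤ p) (hf : AEMeasurable f μ) :
    (∫⁻ x, f x ∂μ) ^ p ≤ (∫⁻ x, f x ^ p ∂μ) * μ univ ^ (p - 1) := by
  have hp0 : 0 < p := by linarith
  have h := eLpNorm'_le_eLpNorm'_mul_rpow_measure_univ one_pos hp hf.aestronglyMeasurable
  simp only [eLpNorm', enorm_eq_self, ENNReal.rpow_one, div_one] at h
  refine (ENNReal.rpow_le_rpow h hp0.le).trans_eq ?_
  rw [ENNReal.mul_rpow_of_nonneg _ _ hp0.le, ← ENNReal.rpow_mul, ← ENNReal.rpow_mul,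
    one_div_mul_cancel hp0.ne', ENNReal.rpow_one, sub_mul, one_mul, one_div_mul_cancel hp0.ne']

lemma lintegral_comp_abs (φ : ℝ → ℝ≥0∞) :
    ∫⁻ x, φ |x| = 2 * ∫⁻ x in Ioi (0 : ℝ), φ x := by
  have hneg : ∫⁻ x in Iic (0 : ℝ), φ |x| = ∫⁻ x in Ioi (0 : ℝ), φ x := by
    rw [← setLIntegral_congr Iio_ae_eq_Iic,
      ← (Measure.measurePreserving_neg volume).setLIntegral_comp_preimage_emb
        (MeasurableEquiv.neg ℝ).measurableEmbedding φ (Ioi 0), neg_preimage, neg_Ioi, neg_zero]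
    exact setLIntegral_congr_fun measurableSet_Iio fun x hx => by rw [abs_of_neg hx]
  have hpos : ∫⁻ x in Ioi (0 : ℝ), φ |x| = ∫⁻ x in Ioi (0 : ℝ), φ x :=
    setLIntegral_congr_fun measurableSet_Ioi fun x hx => by rw [abs_of_pos hx]
  rw [← lintegral_add_compl _ (measurableSet_Iic (a := (0 : ℝ))), compl_Iic, hneg, hpos, two_mul]

lemma lintegral_Ioi_rpow_neg {p δ : ℝ} (hp : 1 < p) (hδ : 0 < δ) :
    ∫⁻ t in Ioi δ, ENNReal.ofReal (t ^ (-p)) = ENNReal.ofReal (δ ^ (1 - p) / (p - 1)) := by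
  rw [← ofReal_integral_eq_lintegral_ofReal (integrableOn_Ioi_rpow_of_lt (by linarith) hδ),
    integral_Ioi_rpow_of_lt (by linarith) hδ, ← neg_div_neg_eq, neg_neg]
  · congr 2 <;> ring_nf
  · filter_upwards [ae_restrict_mem measurableSet_Ioi] with t ht
    exact Real.rpow_nonneg (hδ.trans ht).le _

lemma lintegral_abs_add_rpow_neg {p δ : ℝ} (hp : 1 < p) (hδ : 0 < δ) :
    ∫⁻ θ, ENNReal.ofReal ((|θ| + δ) ^ (-p)) = ENNReal.ofReal (2 / (p - 1) * δ ^ (1 - p)) := by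
  have hshift := (measurePreserving_add_right volume δ).setLIntegral_comp_preimage_emb
    (measurableEmbedding_addRight δ) (fun t => ENNReal.ofReal (t ^ (-p))) (Ioi δ)
  rw [preimage_add_const_Ioi, sub_self] at hshift
  rw [lintegral_comp_abs fun t => ENNReal.ofReal ((t + δ) ^ (-p)), hshift,
    lintegral_Ioi_rpow_neg hp hδ, ← ENNReal.ofReal_ofNat 2, ← ENNReal.ofReal_mul zero_le_two]
  congr 1
  ring

lemma lintegral_Ioc_inv_one_sub {r : ℝ} (hr0 : 0 ≤ r) (hr1 : r < 1) :
    ∫⁻ s in Ioc 0 r, ENNReal.ofReal (1 - s)⁻¹ = ENNReal.ofReal (Real.log (1 / (1 - r))) := by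
  have hcont : ContinuousOn (fun s : ℝ => (1 - s)⁻¹) (Icc 0 r) :=
    ContinuousOn.inv₀ (by fun_prop) fun s hs => by linarith [hs.2]
  rw [← ofReal_integral_eq_lintegral_ofReal (hcont.integrableOn_Icc.mono_set Ioc_subset_Icc_self),
    ← intervalIntegral.integral_of_le hr0,
    intervalIntegral.integral_comp_sub_left (fun x => x⁻¹) 1,
    integral_inv_of_pos (by linarith) (by linarith), sub_zero]
  filter_upwards [ae_restrict_mem measurableSet_Ioc] with s hs
  exact inv_nonneg.2 (by linarith [hs.2])

lemma lintegral_Ioo_one_sub_rpow {β r : ℝ} (hβ : -1 < β) (hr : r < 1) :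
    ∫⁻ s in Ioo r 1, ENNReal.ofReal ((1 - s) ^ β) =
      ENNReal.ofReal ((1 - r) ^ (β + 1) / (β + 1)) := by
  have hintegrable : IntervalIntegrable (fun s : ℝ => (1 - s) ^ β) volume r 1 := by
    simpa using (intervalIntegral.intervalIntegrable_rpow' (a := 1 - r) (b := 0)
      hβ).comp_sub_left 1
  rw [← ofReal_integral_eq_lintegral_ofReal
      ((intervalIntegrable_iff_integrableOn_Ioo_of_le hr.le).1 hintegrable),
    ← integral_Ioc_eq_integral_Ioo, ← intervalIntegral.integral_of_le hr.le,
    intervalIntegral.integral_comp_sub_left (fun x => x ^ β) 1, integral_rpow (Or.inl hβ),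
    sub_self, Real.zero_rpow (by linarith), sub_zero]
  filter_upwards [ae_restrict_mem measurableSet_Ioo] with s hs
  exact Real.rpow_nonneg (by linarith [hs.2]) _

/- On `(0, r)` the factor `1 - r * s` is comparable to `1 - s`, which produces the logarithm;
on `(r, 1)` it is comparable to `1 - r`. -/
lemma lintegral_one_sub_rpow_mul_one_sub_mul_rpow_le {p r : ℝ} (hp : 1 < p) (hr0 : 0 ≤ r)
    (hr1 : r < 1) :
    ∫⁻ s in Ioo (0 : ℝ) 1, ENNReal.ofReal ((1 - s) ^ (p - 2) * (1 - r * s) ^ (1 - p)) ≤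
      ENNReal.ofReal (Real.log (1 / (1 - r)) + 1 / (p - 1)) := by
  have hr : 0 < 1 - r := by linarith
  have hsub : Ioo (0 : ℝ) 1 ⊆ Ioc 0 r ∪ Ioo r 1 := fun s hs =>
    (le_or_gt s r).imp (fun h => ⟨hs.1, h⟩) (fun h => ⟨h, hs.2⟩)
  have hnear : ∀ s ∈ Ioc (0 : ℝ) r, (1 - s) ^ (p - 2) * (1 - r * s) ^ (1 - p) ≤ (1 - s)⁻¹ := by
    intro s hs
    have hs1 : 0 < 1 - s := by linarith [hs.2]
    calc (1 - s) ^ (p - 2) * (1 - r * s) ^ (1 - p)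
        ≤ (1 - s) ^ (p - 2) * (1 - s) ^ (1 - p) := by
          gcongr ?_ * ?_
          exact Real.rpow_le_rpow_of_nonpos hs1 (by nlinarith [hs.1]) (by linarith)
      _ = (1 - s)⁻¹ := by
          rw [← Real.rpow_add hs1, ← Real.rpow_neg_one]
          ring_nf
  have hfar : ∀ s ∈ Ioo r 1, ENNReal.ofReal ((1 - s) ^ (p - 2) * (1 - r * s) ^ (1 - p)) ≤
      ENNReal.ofReal ((1 - r) ^ (1 - p)) * ENNReal.ofReal ((1 - s) ^ (p - 2)) := by
    intro s hs
    have hs1 : 0 < 1 - s := by linarith [hs.2]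
    rw [← ENNReal.ofReal_mul (by positivity), mul_comm]
    refine ENNReal.ofReal_le_ofReal ?_
    gcongr ?_ * ?_
    exact Real.rpow_le_rpow_of_nonpos hr (by nlinarith [hs.1]) (by linarith)
  have hlog : 0 ≤ Real.log (1 / (1 - r)) := Real.log_nonneg (by rw [le_div_iff₀ hr]; linarith)
  refine (lintegral_mono_set hsub).trans ((lintegral_union_le _ _ _).trans ?_)
  rw [ENNReal.ofReal_add hlog (by simp [hp.le])]
  refine add_le_add ?_ ?_
  · rw [← lintegral_Ioc_inv_one_sub hr0 hr1]
    exact setLIntegral_mono' measurableSet_Ioc fun s hs => ENNReal.ofReal_le_ofReal (hnear s hs)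
  · refine (setLIntegral_mono' measurableSet_Ioo hfar).trans_eq ?_
    rw [lintegral_const_mul _ (by fun_prop), lintegral_Ioo_one_sub_rpow (by linarith) hr1,
      ← ENNReal.ofReal_mul (by positivity), mul_div_assoc', ← Real.rpow_add hr,
      show 1 - p + (p - 2 + 1) = 0 by ring, Real.rpow_zero, show p - 2 + 1 = p - 1 by ring]

/- Hölder's inequality, after splitting `1 = (1 - s) ^ ((p - 1) / p) * (1 - s) ^ (-((p - 1) / p))`;
the `p / (p - 1)`-th power of the second factor is `(1 - s)⁻¹`. -/
lemma lintegral_Ioc_le_rpow_mul_log_rpow {p r : ℝ} (hp : 1 < p) (hr0 : 0 ≤ r) (hr1 : r < 1)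
    {φ : ℝ → ℝ≥0∞} (hφ : AEMeasurable φ (volume.restrict (Ioc 0 r))) :
    ∫⁻ s in Ioc 0 r, φ s ≤
      (∫⁻ s in Ioo (0 : ℝ) 1, ENNReal.ofReal ((1 - s) ^ (p - 1)) * φ s ^ p) ^ (1 / p) *
        ENNReal.ofReal (Real.log (1 / (1 - r))) ^ ((p - 1) / p) := by
  have hp0 : 0 < p := by linarith
  have hp1 : 0 < p - 1 := by linarith
  have hpq : p.HolderConjugate (p / (p - 1)) := Real.HolderConjugate.conjExponent hp
  have hpos : ∀ s ∈ Ioc 0 r, 0 < 1 - s := fun s hs => by linarith [hs.2]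
  calc ∫⁻ s in Ioc 0 r, φ s
      = ∫⁻ s in Ioc 0 r, ((fun s => ENNReal.ofReal ((1 - s) ^ ((p - 1) / p)) * φ s) *
          fun s => ENNReal.ofReal ((1 - s) ^ (-((p - 1) / p)))) s := by
        refine setLIntegral_congr_fun measurableSet_Ioc fun s hs => ?_
        have hs := hpos s hs
        simp only [Pi.mul_apply]
        rw [mul_right_comm, ← ENNReal.ofReal_mul (by positivity), ← Real.rpow_add hs,
          add_neg_cancel, Real.rpow_zero, ENNReal.ofReal_one, one_mul]
    _ ≤ _ := ENNReal.lintegral_mul_le_Lp_mul_Lq _ hpq (by fun_prop) (by fun_prop)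
    _ = (∫⁻ s in Ioc 0 r, ENNReal.ofReal ((1 - s) ^ (p - 1)) * φ s ^ p) ^ (1 / p) *
        (∫⁻ s in Ioc 0 r, ENNReal.ofReal (1 - s)⁻¹) ^ ((p - 1) / p) := by
        rw [one_div_div]
        congr 2 <;> refine setLIntegral_congr_fun measurableSet_Ioc fun s hs => ?_
        · have hs := hpos s hs
          rw [ENNReal.mul_rpow_of_nonneg _ _ hp0.le,
            ENNReal.ofReal_rpow_of_nonneg (by positivity) hp0.le, ← Real.rpow_mul hs.le,
            div_mul_cancel₀ _ hp0.ne']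
        · have hs := hpos s hs
          rw [ENNReal.ofReal_rpow_of_nonneg (by positivity) (by positivity), ← Real.rpow_mul hs.le,
            neg_mul, div_mul_div_cancel₀ hp0.ne', div_self hp1.ne', Real.rpow_neg_one]
    _ ≤ _ := by
        rw [lintegral_Ioc_inv_one_sub hr0 hr1]
        gcongr

end Integrals

section DiskIntegrals

lemma lintegral_ball_eq_polar (c : ℂ) (R : ℝ) {h : ℂ → ℝ≥0∞} (hh : Measurable h) :
    ∫⁻ w in ball c R, h w = ∫⁻ s in Ioo 0 R, ENNReal.ofReal s *
      ∫⁻ θ in Ioo (-π) π, h (circleMap c s θ) := by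
  set H : ℂ → ℝ≥0∞ := fun w => (ball c R).indicator h (c + w) with hH
  have hHm : Measurable H := (hh.indicator measurableSet_ball).comp (measurable_const_add c)
  have hpolar : ∀ q : ℝ × ℝ, Complex.polarCoord.symm q = circleMap 0 q.1 q.2 := fun q => by
    simp [circleMap, Complex.exp_mul_I]
  have hcirc : Measurable fun q : ℝ × ℝ => circleMap 0 q.1 q.2 := by
    unfold circleMap
    fun_prop
  calc ∫⁻ w in ball c R, h w = ∫⁻ w, H w := by
        rw [hH, ← lintegral_indicator measurableSet_ball,
          lintegral_add_left_eq_self ((ball c R).indicator h) c]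
    _ = ∫⁻ q in Ioi (0 : ℝ) ×ˢ Ioo (-π) π, ENNReal.ofReal q.1 * H (circleMap 0 q.1 q.2) := by
        simp_rw [← Complex.lintegral_comp_polarCoord_symm H, hpolar, smul_eq_mul]
        rfl
    _ = ∫⁻ s in Ioi (0 : ℝ), ENNReal.ofReal s * ∫⁻ θ in Ioo (-π) π, H (circleMap 0 s θ) := by
        rw [Measure.volume_eq_prod, ← Measure.prod_restrict, lintegral_prod _
          (by fun_prop)]
        exact lintegral_congr fun s => lintegral_const_mul' _ _ ENNReal.ofReal_ne_top
    _ = ∫⁻ s in Ioi (0 : ℝ), (Iio R).indicator (fun s => ENNReal.ofReal s *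
          ∫⁻ θ in Ioo (-π) π, h (circleMap c s θ)) s := by
        refine setLIntegral_congr_fun measurableSet_Ioi fun s (hs : 0 < s) => ?_
        by_cases hsR : s < R <;> simp [hH, indicator, hsR, abs_of_pos hs, circleMap]
    _ = _ := by
        rw [lintegral_indicator measurableSet_Iio, Measure.restrict_restrict measurableSet_Iio,
          inter_comm, Ioi_inter_Iio]

lemma lintegral_ball_comp_circle_mul (R : ℝ) (h : ℂ → ℝ≥0∞) (u : Circle) :
    ∫⁻ w in ball (0 : ℂ) R, h (u * w) = ∫⁻ w in ball (0 : ℂ) R, h w := by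
  have hpre : rotation u ⁻¹' ball 0 R = ball 0 R := by
    rw [LinearIsometryEquiv.preimage_ball, map_zero]
  have hrot := (rotation u).measurePreserving.setLIntegral_comp_preimage_emb
    (rotation u).toHomeomorph.measurableEmbedding h (ball 0 R)
  simpa only [hpre, rotation_apply] using hrot

end DiskIntegrals

section MeanValue

variable {E : Type*} [NormedAddCommGroup E] [NormedSpace ℂ E] [CompleteSpace E]

lemma enorm_rpow_le_lintegral_circleMap {g : ℂ → E} {c : ℂ} {s p : ℝ} (hs : 0 < s) (hp : 1 ≤ p)
    (hg : DiffContOnCl ℂ g (ball c s)) :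
    ENNReal.ofReal (2 * π) * ‖g c‖ₑ ^ p ≤ ∫⁻ θ in Ioo (-π) π, ‖g (circleMap c s θ)‖ₑ ^ p := by
  have hvol : volume (Ioo (-π) π) = ENNReal.ofReal (2 * π) := by
    rw [Real.volume_Ioo]
    ring_nf
  have hmean : (2 * π) • g c = ∫ θ in Ioo (-π) π, g (circleMap c s θ) := by
    have havg := DiffContOnCl.circleAverage (R := s) (by rwa [abs_of_pos hs])
    rw [Real.circleAverage_eq_integral_add (-π),
      intervalIntegral.integral_comp_add_right fun θ => g (circleMap c s θ), zero_add,
      show 2 * π + -π = π by ring, intervalIntegral.integral_of_le (by linarith [Real.pi_pos]),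
      integral_Ioc_eq_integral_Ioo] at havg
    rw [← havg, smul_smul, mul_inv_cancel₀ (by positivity), one_smul]
  have hcont : Continuous fun θ => g (circleMap c s θ) :=
    hg.continuousOn.comp_continuous (continuous_circleMap c s) fun θ => by
      rw [closure_ball c hs.ne']
      exact circleMap_mem_closedBall c hs.le θ
  set V := ENNReal.ofReal (2 * π) with hV
  have hV0 : V ≠ 0 := by simp [hV, Real.pi_pos]
  have hVtop : V ≠ ⊤ := ENNReal.ofReal_ne_top
  have hnorm : V * ‖g c‖ₑ ≤ ∫⁻ θ in Ioo (-π) π, ‖g (circleMap c s θ)‖ₑ := by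
    rw [hV, ← Real.enorm_eq_ofReal (by positivity), ← enorm_smul, hmean]
    exact enorm_integral_le_lintegral_enorm _
  refine (ENNReal.mul_le_mul_iff_left (c := V ^ (p - 1)) (by simp [hV0, hVtop])
    (ENNReal.rpow_ne_top_of_ne_zero hV0 hVtop)).1 ?_
  calc V * ‖g c‖ₑ ^ p * V ^ (p - 1) = (V * ‖g c‖ₑ) ^ p := by
        rw [ENNReal.mul_rpow_of_nonneg _ _ (by linarith), mul_right_comm]
        nth_rw 1 [← ENNReal.rpow_one V]
        rw [← ENNReal.rpow_add _ _ hV0 hVtop, add_sub_cancel]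
    _ ≤ (∫⁻ θ in Ioo (-π) π, ‖g (circleMap c s θ)‖ₑ) ^ p := by gcongr
    _ ≤ _ := by
        simpa only [Measure.restrict_apply_univ, hvol] using
          rpow_lintegral_le (μ := volume.restrict (Ioo (-π) π)) hp
            hcont.enorm.measurable.aemeasurable

lemma enorm_rpow_le_lintegral_ball {g : ℂ → E} {c : ℂ} {R p : ℝ} (hR : 0 ≤ R) (hp : 1 ≤ p)
    (hg : DifferentiableOn ℂ g (ball c R)) :
    ENNReal.ofReal (π * R ^ 2) * ‖g c‖ₑ ^ p ≤ ∫⁻ w in ball c R, ‖g w‖ₑ ^ p := by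
  classical
  set h : ℂ → ℝ≥0∞ := (ball c R).indicator fun w => ‖g w‖ₑ ^ p with hh
  have hcont : ContinuousOn (fun w => ‖g w‖ₑ ^ p) (ball c R) :=
    ENNReal.continuous_rpow_const.comp_continuousOn hg.continuousOn.enorm
  have hmeas : Measurable h := by
    rw [hh, ← piecewise_eq_indicator]
    exact hcont.measurable_piecewise continuousOn_const measurableSet_ball
  have hrad : ∫⁻ s in Ioo 0 R, ENNReal.ofReal s = ENNReal.ofReal (R ^ 2 / 2) := by
    rw [← ofReal_integral_eq_lintegral_ofReal
        (continuous_id'.integrableOn_Icc.mono_set Ioo_subset_Icc_self),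
      ← integral_Ioc_eq_integral_Ioo, ← intervalIntegral.integral_of_le hR, integral_id,
      zero_pow two_ne_zero, sub_zero]
    filter_upwards [ae_restrict_mem measurableSet_Ioo] with s hs using hs.1.le
  have hcircle : ∀ s ∈ Ioo 0 R, ENNReal.ofReal (2 * π) * ‖g c‖ₑ ^ p ≤
      ∫⁻ θ in Ioo (-π) π, h (circleMap c s θ) := by
    intro s hs
    have hcl : closedBall c s ⊆ ball c R := closedBall_subset_ball hs.2
    have hmem : ∀ θ, circleMap c s θ ∈ ball c R := fun θ =>
      hcl (circleMap_mem_closedBall c hs.1.le θ)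
    simp only [hh, indicator_of_mem (hmem _)]
    refine enorm_rpow_le_lintegral_circleMap hs.1 hp (DifferentiableOn.diffContOnCl ?_)
    exact hg.mono (closure_ball_subset_closedBall.trans hcl)
  calc ENNReal.ofReal (π * R ^ 2) * ‖g c‖ₑ ^ p
      = ∫⁻ s in Ioo 0 R, ENNReal.ofReal s * (ENNReal.ofReal (2 * π) * ‖g c‖ₑ ^ p) := by
        rw [lintegral_mul_const _ ENNReal.measurable_ofReal, hrad, ← mul_assoc,
          ← ENNReal.ofReal_mul (by positivity)]
        ring_nf
    _ ≤ ∫⁻ s in Ioo 0 R, ENNReal.ofReal s * ∫⁻ θ in Ioo (-π) π, h (circleMap c s θ) :=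
        setLIntegral_mono' measurableSet_Ioo fun s hs => by
          gcongr
          exact hcircle s hs
    _ = ∫⁻ w in ball c R, ‖g w‖ₑ ^ p := by
        rw [← lintegral_ball_eq_polar c R hmeas, hh,
          setLIntegral_indicator measurableSet_ball, inter_self]

end MeanValue

section RadialEmbedding

/-- The disk of radius `(1 - s) / 2` about the point `s * u` of the radius ending at `u`. Its radius
is comparable to its distance from the unit circle, as for the disks of a Whitney covering. -/
def whitneyDisk (u : Circle) (s : ℝ) : Set ℂ := ball (s * u) ((1 - s) / 2)

lemma norm_ofReal_mul_circle {s : ℝ} (hs : 0 ≤ s) (u : Circle) : ‖(s * u : ℂ)‖ = s := by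
  rw [norm_mul, Circle.norm_coe, mul_one, Complex.norm_of_nonneg hs]

lemma whitneyDisk_subset_unitDisk (u : Circle) {s : ℝ} (hs : s ∈ Ioo (0 : ℝ) 1) :
    whitneyDisk u s ⊆ unitDisk := by
  refine ball_subset_ball' ?_
  rw [dist_zero_right, norm_ofReal_mul_circle hs.1.le]
  linarith [hs.2]

lemma mem_Ioo_of_mem_whitneyDisk {u : Circle} {s : ℝ} {w : ℂ} (hs : 0 ≤ s)
    (hw : w ∈ whitneyDisk u s) :
    s ∈ Ioo (1 - 2 * (1 - ‖w‖)) (1 - 2 / 3 * (1 - ‖w‖)) := by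
  have hdist : ‖w - s * u‖ < (1 - s) / 2 := by rwa [whitneyDisk, mem_ball, dist_eq_norm] at hw
  have habs := (abs_norm_sub_norm_le w (s * u)).trans_lt hdist
  rw [norm_ofReal_mul_circle hs, abs_lt] at habs
  constructor <;> linarith

lemma lintegral_whitneyDisk_shadow_le (β : ℝ) (u : Circle) {w : ℂ} (hw : w ∈ unitDisk) :
    ∫⁻ s in Ioo (0 : ℝ) 1 ∩ {s | w ∈ whitneyDisk u s}, ENNReal.ofReal ((1 - s) ^ (β - 1)) ≤
      ENNReal.ofReal (4 / 3 * 3 ^ |β - 1| * (1 - ‖w‖ ^ 2) ^ β) := by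
  have hw1 : ‖w‖ < 1 := mem_ball_zero_iff.1 hw
  have hw0 := norm_nonneg w
  set x := 1 - ‖w‖ ^ 2
  have hx0 : 0 < x := by nlinarith
  have hxlower : 1 - ‖w‖ ≤ x := by nlinarith
  have hxupper : x ≤ 2 * (1 - ‖w‖) := by nlinarith
  set I := Ioo (1 - 2 * (1 - ‖w‖)) (1 - 2 / 3 * (1 - ‖w‖))
  have hweight : ∀ s ∈ I, (1 - s) ^ (β - 1) ≤ 3 ^ |β - 1| * x ^ (β - 1) := fun s hs =>
    rpow_le_rpow_abs_mul_rpow _ three_pos hx0 (by linarith [hs.2]) (by linarith [hs.1])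
  calc ∫⁻ s in Ioo (0 : ℝ) 1 ∩ {s | w ∈ whitneyDisk u s}, ENNReal.ofReal ((1 - s) ^ (β - 1))
      ≤ ∫⁻ s in I, ENNReal.ofReal ((1 - s) ^ (β - 1)) :=
        lintegral_mono_set fun s hs => mem_Ioo_of_mem_whitneyDisk hs.1.1.le hs.2
    _ ≤ ∫⁻ _ in I, ENNReal.ofReal (3 ^ |β - 1| * x ^ (β - 1)) :=
        setLIntegral_mono' measurableSet_Ioo fun s hs => ENNReal.ofReal_le_ofReal (hweight s hs)
    _ = ENNReal.ofReal (3 ^ |β - 1| * x ^ (β - 1) * (4 / 3 * (1 - ‖w‖))) := by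
        rw [setLIntegral_const, Real.volume_Ioo, ← ENNReal.ofReal_mul (by positivity)]
        ring_nf
    _ ≤ ENNReal.ofReal (3 ^ |β - 1| * x ^ (β - 1) * (4 / 3 * x)) := by gcongr
    _ = _ := by
        rw [Real.rpow_sub_one hx0.ne']
        field_simp

lemma lintegral_whitneyDisk_le (β : ℝ) (u : Circle) {h : ℂ → ℝ≥0∞}
    (hh : AEMeasurable h (volume.restrict unitDisk)) :
    ∫⁻ s in Ioo (0 : ℝ) 1, ENNReal.ofReal ((1 - s) ^ (β - 1)) * ∫⁻ w in whitneyDisk u s, h w ≤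
      ENNReal.ofReal (4 / 3 * 3 ^ |β - 1|) *
        ∫⁻ w in unitDisk, ENNReal.ofReal ((1 - ‖w‖ ^ 2) ^ β) * h w := by
  set S : Set (ℝ × ℂ) := {q | q.2 ∈ whitneyDisk u q.1} with hS
  have hSm : MeasurableSet S := by
    simp only [hS, whitneyDisk, mem_ball]
    exact (isOpen_lt (by fun_prop) (by fun_prop)).measurableSet
  set F : ℝ → ℂ → ℝ≥0∞ := fun s w =>
    S.indicator (fun q => ENNReal.ofReal ((1 - q.1) ^ (β - 1)) * h q.2) (s, w)
  have hFm : AEMeasurable (Function.uncurry F)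
      ((volume.restrict (Ioo (0 : ℝ) 1)).prod (volume.restrict unitDisk)) :=
    AEMeasurable.indicator (by fun_prop) hSm
  calc ∫⁻ s in Ioo (0 : ℝ) 1, ENNReal.ofReal ((1 - s) ^ (β - 1)) * ∫⁻ w in whitneyDisk u s, h w
      = ∫⁻ s in Ioo (0 : ℝ) 1, ∫⁻ w in unitDisk, F s w := by
        refine setLIntegral_congr_fun measurableSet_Ioo fun s hs => ?_
        rw [← lintegral_const_mul' _ _ ENNReal.ofReal_ne_top,
          ← inter_eq_left.2 (whitneyDisk_subset_unitDisk u hs),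
          ← setLIntegral_indicator (show MeasurableSet (whitneyDisk u s) from measurableSet_ball)]
        rfl
    _ = ∫⁻ w in unitDisk, ∫⁻ s in Ioo (0 : ℝ) 1, F s w := lintegral_lintegral_swap hFm
    _ = ∫⁻ w in unitDisk, (∫⁻ s in Ioo (0 : ℝ) 1 ∩ {s | w ∈ whitneyDisk u s},
          ENNReal.ofReal ((1 - s) ^ (β - 1))) * h w := by
        refine lintegral_congr fun w => ?_
        have hshadow : MeasurableSet {s | w ∈ whitneyDisk u s} := measurable_prodMk_right hSm
        rw [← lintegral_mul_const _ (by fun_prop), inter_comm, ← setLIntegral_indicator hshadow]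
        rfl
    _ ≤ ∫⁻ w in unitDisk, ENNReal.ofReal (4 / 3 * 3 ^ |β - 1|) *
          (ENNReal.ofReal ((1 - ‖w‖ ^ 2) ^ β) * h w) := by
        refine setLIntegral_mono' measurableSet_ball fun w hw => ?_
        rw [← mul_assoc, ← ENNReal.ofReal_mul (by positivity)]
        gcongr
        exact lintegral_whitneyDisk_shadow_le β u hw
    _ = _ := lintegral_const_mul' _ _ ENNReal.ofReal_ne_top

variable {E : Type*} [NormedAddCommGroup E] [NormedSpace ℂ E] [CompleteSpace E]

lemma lintegral_radius_rpow_le {g : ℂ → E} {p : ℝ} (β : ℝ) (u : Circle) (hp : 1 ≤ p)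
    (hg : DifferentiableOn ℂ g unitDisk) :
    ∫⁻ s in Ioo (0 : ℝ) 1, ENNReal.ofReal ((1 - s) ^ (β + 1)) * ‖g (s * u)‖ₑ ^ p ≤
      ENNReal.ofReal (16 / (3 * π) * 3 ^ |β - 1|) *
        ∫⁻ w in unitDisk, ENNReal.ofReal ((1 - ‖w‖ ^ 2) ^ β) * ‖g w‖ₑ ^ p := by
  have hmeas : AEMeasurable (fun w => ‖g w‖ₑ ^ p) (volume.restrict unitDisk) :=
    (ENNReal.continuous_rpow_const.comp_continuousOn hg.continuousOn.enorm).aemeasurable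
      measurableSet_ball
  have hpoint : ∀ s ∈ Ioo (0 : ℝ) 1,
      ENNReal.ofReal ((1 - s) ^ (β + 1)) * ‖g (s * u)‖ₑ ^ p ≤ ENNReal.ofReal (4 / π) *
        (ENNReal.ofReal ((1 - s) ^ (β - 1)) * ∫⁻ w in whitneyDisk u s, ‖g w‖ₑ ^ p) := by
    intro s hs
    have hs1 : 0 < 1 - s := by linarith [hs.2]
    have hsplit : (1 - s) ^ (β + 1) = 4 / π * ((1 - s) ^ (β - 1) * (π * ((1 - s) / 2) ^ 2)) := by
      rw [show β + 1 = β - 1 + 2 by ring, Real.rpow_add hs1, Real.rpow_two]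
      field_simp
      norm_num
    rw [hsplit, ENNReal.ofReal_mul (by positivity), ENNReal.ofReal_mul (by positivity), mul_assoc,
      mul_assoc]
    gcongr
    exact enorm_rpow_le_lintegral_ball (by linarith) hp
      (hg.mono (whitneyDisk_subset_unitDisk u hs))
  calc ∫⁻ s in Ioo (0 : ℝ) 1, ENNReal.ofReal ((1 - s) ^ (β + 1)) * ‖g (s * u)‖ₑ ^ p
      ≤ ENNReal.ofReal (4 / π) * ∫⁻ s in Ioo (0 : ℝ) 1,
          ENNReal.ofReal ((1 - s) ^ (β - 1)) * ∫⁻ w in whitneyDisk u s, ‖g w‖ₑ ^ p := by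
        rw [← lintegral_const_mul' _ _ ENNReal.ofReal_ne_top]
        exact setLIntegral_mono' measurableSet_Ioo hpoint
    _ ≤ ENNReal.ofReal (4 / π) * (ENNReal.ofReal (4 / 3 * 3 ^ |β - 1|) *
          ∫⁻ w in unitDisk, ENNReal.ofReal ((1 - ‖w‖ ^ 2) ^ β) * ‖g w‖ₑ ^ p) := by
        gcongr
        exact lintegral_whitneyDisk_le β u hmeas
    _ = _ := by
        rw [← mul_assoc, ← ENNReal.ofReal_mul (by positivity)]
        ring_nf

lemma enorm_sub_le_lintegral_radius {f : ℂ → E} (hf : DifferentiableOn ℂ f unitDisk) (u : Circle)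
    {r : ℝ} (hr0 : 0 ≤ r) (hr1 : r < 1) :
    ‖f (r * u) - f 0‖ₑ ≤ ∫⁻ s in Ioc 0 r, ‖deriv f (s * u)‖ₑ := by
  have hmem : ∀ s ∈ uIcc 0 r, (s * u : ℂ) ∈ unitDisk := fun s hs => by
    rw [uIcc_of_le hr0] at hs
    rw [unitDisk, mem_ball_zero_iff, norm_ofReal_mul_circle hs.1]
    exact hs.2.trans_lt hr1
  have hderiv : ∀ s ∈ uIcc 0 r,
      HasDerivAt (fun s : ℝ => f (s * u)) ((u : ℂ) • deriv f (s * u)) s := fun s hs =>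
    (hf.differentiableAt (isOpen_ball.mem_nhds (hmem s hs))).hasDerivAt.scomp s
      (by simpa using (Complex.ofRealCLM.hasDerivAt (x := s)).mul_const (u : ℂ))
  have hcont : ContinuousOn (fun s : ℝ => (u : ℂ) • deriv f (s * u)) (uIcc 0 r) :=
    ((hf.deriv isOpen_ball).continuousOn.comp (by fun_prop) hmem).const_smul _
  have hftc := intervalIntegral.integral_eq_sub_of_hasDerivAt hderiv hcont.intervalIntegrable
  rw [Complex.ofReal_zero, zero_mul, intervalIntegral.integral_of_le hr0] at hftc
  rw [← hftc]
  refine (enorm_integral_le_lintegral_enorm _).trans_eq (lintegral_congr fun s => ?_)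
  rw [enorm_smul, ← ofReal_norm, Circle.norm_coe, ENNReal.ofReal_one, one_mul]

end RadialEmbedding

section ForelliRudin

lemma log_two_le_log_two_div {r : ℝ} (hr0 : 0 ≤ r) (hr1 : r < 1) :
    Real.log 2 ≤ Real.log (2 / (1 - r ^ 2)) := by
  have hr : 0 < 1 - r ^ 2 := by nlinarith
  refine Real.log_le_log two_pos ?_
  rw [le_div_iff₀ hr]
  nlinarith [sq_nonneg r]

lemma log_two_div_pos {r : ℝ} (hr0 : 0 ≤ r) (hr1 : r < 1) : 0 < Real.log (2 / (1 - r ^ 2)) :=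
  (Real.log_pos one_lt_two).trans_le (log_two_le_log_two_div hr0 hr1)

lemma log_one_div_le_log_two_div {r : ℝ} (hr0 : 0 ≤ r) (hr1 : r < 1) :
    Real.log (1 / (1 - r)) ≤ Real.log (2 / (1 - r ^ 2)) := by
  have hr : 0 < 1 - r := by linarith
  refine Real.log_le_log (by positivity) ?_
  rw [div_le_div_iff₀ hr (by nlinarith)]
  nlinarith

lemma exists_circle_eq_norm_mul (z : ℂ) : ∃ u : Circle, z = ‖z‖ * u :=
  ⟨Circle.exp z.arg, by rw [Circle.coe_exp, Complex.norm_mul_exp_arg_mul_I]⟩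

lemma one_sub_add_abs_le_norm_one_sub_circleMap {ρ θ : ℝ} (hρ0 : 0 ≤ ρ) (hρ1 : ρ ≤ 1)
    (hθ : |θ| ≤ π) : 1 - ρ + |θ| ≤ 2 * π * ‖1 - circleMap 0 ρ θ‖ := by
  set N := ‖1 - circleMap 0 ρ θ‖
  have hradial : 1 - ρ ≤ N := by
    simpa [abs_of_nonneg hρ0] using norm_sub_norm_le (1 : ℂ) (circleMap 0 ρ θ)
  have hchord : ‖Complex.exp (Complex.I * θ) - 1‖ ≤ N + (1 - ρ) := by
    have hsplit : Complex.exp (Complex.I * θ) - 1 =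
        (1 - ρ : ℝ) * Complex.exp (θ * Complex.I) - (1 - circleMap 0 ρ θ) := by
      simp only [circleMap, mul_comm Complex.I]
      push_cast
      ring
    rw [hsplit]
    refine (norm_sub_le _ _).trans_eq ?_
    rw [norm_mul, Complex.norm_exp_ofReal_mul_I, Complex.norm_of_nonneg (by linarith), mul_one,
      add_comm]
  have hsin : 2 / π * |θ / 2| ≤ |Real.sin (θ / 2)| := by
    refine Real.mul_abs_le_abs_sin ?_
    rw [abs_div, abs_two]
    linarith
  rw [Complex.norm_exp_I_mul_ofReal_sub_one, norm_mul, Real.norm_two, Real.norm_eq_abs] at hchord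
  have hangle : |θ| ≤ π * N := by
    calc |θ| = π * (2 / π * |θ / 2|) := by
          rw [abs_div, abs_two]
          field_simp
      _ ≤ π * N := by
          gcongr
          linarith
  nlinarith [Real.pi_gt_three, norm_nonneg (1 - circleMap 0 ρ θ)]

lemma lintegral_norm_one_sub_circleMap_rpow_neg_le {p ρ : ℝ} (hp : 1 < p) (hρ0 : 0 ≤ ρ)
    (hρ1 : ρ < 1) :
    ∫⁻ θ in Ioo (-π) π, ENNReal.ofReal (‖1 - circleMap 0 ρ θ‖ ^ (-p)) ≤
      ENNReal.ofReal ((2 * π) ^ p * (2 / (p - 1) * (1 - ρ) ^ (1 - p))) := by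
  have hρ : 0 < 1 - ρ := by linarith
  have hkernel : ∀ θ ∈ Ioo (-π) π,
      ‖1 - circleMap 0 ρ θ‖ ^ (-p) ≤ (2 * π) ^ p * (|θ| + (1 - ρ)) ^ (-p) := by
    intro θ hθ
    have hle := one_sub_add_abs_le_norm_one_sub_circleMap hρ0 hρ1.le (abs_lt.2 hθ).le
    have hpos : 0 < |θ| + (1 - ρ) := by positivity
    calc ‖1 - circleMap 0 ρ θ‖ ^ (-p) ≤ ((2 * π)⁻¹ * (|θ| + (1 - ρ))) ^ (-p) := by
          refine Real.rpow_le_rpow_of_nonpos (by positivity) ?_ (by linarith)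
          rw [inv_mul_le_iff₀ (by positivity)]
          linarith
      _ = (2 * π) ^ p * (|θ| + (1 - ρ)) ^ (-p) := by
          rw [Real.mul_rpow (by positivity) hpos.le, Real.inv_rpow (by positivity),
            ← Real.rpow_neg (by positivity), neg_neg]
  calc ∫⁻ θ in Ioo (-π) π, ENNReal.ofReal (‖1 - circleMap 0 ρ θ‖ ^ (-p))
      ≤ ∫⁻ θ in Ioo (-π) π,
          ENNReal.ofReal ((2 * π) ^ p) * ENNReal.ofReal ((|θ| + (1 - ρ)) ^ (-p)) := by
        refine setLIntegral_mono' measurableSet_Ioo fun θ hθ => ?_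
        rw [← ENNReal.ofReal_mul (by positivity)]
        exact ENNReal.ofReal_le_ofReal (hkernel θ hθ)
    _ ≤ ∫⁻ θ, ENNReal.ofReal ((2 * π) ^ p) * ENNReal.ofReal ((|θ| + (1 - ρ)) ^ (-p)) :=
        setLIntegral_le_lintegral _ _
    _ = _ := by
        rw [lintegral_const_mul' _ _ ENNReal.ofReal_ne_top, lintegral_abs_add_rpow_neg hp hρ,
          ← ENNReal.ofReal_mul (by positivity)]

lemma lintegral_unitDisk_norm_one_sub_ofReal_mul_rpow_neg_le {p r : ℝ} (hp : 1 < p) (hr0 : 0 ≤ r)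
    (hr1 : r < 1) :
    ∫⁻ w in unitDisk, ENNReal.ofReal ((1 - ‖w‖ ^ 2) ^ (p - 2) * ‖1 - r * w‖ ^ (-p)) ≤
      ENNReal.ofReal (2 ^ |p - 2| * (2 * π) ^ p * (2 / (p - 1)) *
        (Real.log (1 / (1 - r)) + 1 / (p - 1))) := by
  have : 0 < p - 1 := sub_pos.2 hp
  set K := 2 ^ |p - 2| * (2 * π) ^ p * (2 / (p - 1)) with hK
  have hcircle : ∀ s ∈ Ioo (0 : ℝ) 1, ENNReal.ofReal s * ∫⁻ θ in Ioo (-π) π, ENNReal.ofReal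
      ((1 - ‖circleMap 0 s θ‖ ^ 2) ^ (p - 2) * ‖1 - r * circleMap 0 s θ‖ ^ (-p)) ≤
        ENNReal.ofReal K * ENNReal.ofReal ((1 - s) ^ (p - 2) * (1 - r * s) ^ (1 - p)) := by
    intro s ⟨hs0, hs1⟩
    have hs : 0 < 1 - s := by linarith
    have hs2 : 0 ≤ 1 - s ^ 2 := by nlinarith
    have hrs : 0 < 1 - r * s := by nlinarith
    have hweight : (1 - s ^ 2) ^ (p - 2) ≤ 2 ^ |p - 2| * (1 - s) ^ (p - 2) :=
      rpow_le_rpow_abs_mul_rpow _ two_pos hs (by nlinarith) (by nlinarith)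
    have hmul : ∀ θ, r * circleMap 0 s θ = circleMap 0 (r * s) θ := fun θ => by
      simp [circleMap, mul_assoc]
    simp_rw [norm_circleMap_zero, abs_of_pos hs0, hmul,
      ENNReal.ofReal_mul (Real.rpow_nonneg hs2 (p - 2))]
    rw [lintegral_const_mul' _ _ ENNReal.ofReal_ne_top]
    calc _ ≤ 1 * (ENNReal.ofReal (2 ^ |p - 2| * (1 - s) ^ (p - 2)) *
          ENNReal.ofReal ((2 * π) ^ p * (2 / (p - 1) * (1 - r * s) ^ (1 - p)))) := by
          gcongr
          · exact ENNReal.ofReal_le_one.2 hs1.le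
          · exact lintegral_norm_one_sub_circleMap_rpow_neg_le hp (by positivity) (by linarith)
      _ = _ := by
          rw [one_mul, ← ENNReal.ofReal_mul (by positivity), ← ENNReal.ofReal_mul (by positivity),
            hK]
          ring_nf
  rw [unitDisk, lintegral_ball_eq_polar 0 1 (by fun_prop), ENNReal.ofReal_mul (by positivity)]
  refine (setLIntegral_mono' measurableSet_Ioo hcircle).trans ?_
  rw [lintegral_const_mul' _ _ ENNReal.ofReal_ne_top]
  gcongr
  exact lintegral_one_sub_rpow_mul_one_sub_mul_rpow_le hp hr0 hr1

lemma exists_lintegral_unitDisk_norm_one_sub_conj_mul_rpow_neg_le {p : ℝ} (hp : 1 < p) :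
    ∃ C > 0, ∀ a ∈ unitDisk,
      ∫⁻ w in unitDisk, ENNReal.ofReal ((1 - ‖w‖ ^ 2) ^ (p - 2) * ‖1 - conj a * w‖ ^ (-p)) ≤
        ENNReal.ofReal (C * Real.log (2 / (1 - ‖a‖ ^ 2))) := by
  have : 0 < p - 1 := sub_pos.2 hp
  have hlog2 : 0 < Real.log 2 := Real.log_pos one_lt_two
  refine ⟨2 ^ |p - 2| * (2 * π) ^ p * (2 / (p - 1)) * (1 + 1 / (p - 1) / Real.log 2),
    by positivity, fun a ha => ?_⟩
  have ha1 : ‖a‖ < 1 := mem_ball_zero_iff.1 ha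
  have hconst : 1 / (p - 1) ≤ 1 / (p - 1) / Real.log 2 * Real.log (2 / (1 - ‖a‖ ^ 2)) := by
    rw [div_mul_eq_mul_div, le_div_iff₀ hlog2]
    exact mul_le_mul_of_nonneg_left (log_two_le_log_two_div (norm_nonneg a) ha1) (by positivity)
  obtain ⟨u, hu⟩ := exists_circle_eq_norm_mul a
  have hconj : ∀ w : ℂ, conj a * w = ‖a‖ * ((u⁻¹ : Circle) * w) := fun w => by
    conv_lhs => rw [hu]
    rw [map_mul, Complex.conj_ofReal, Circle.coe_inv_eq_conj, mul_assoc]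
  calc ∫⁻ w in unitDisk, ENNReal.ofReal ((1 - ‖w‖ ^ 2) ^ (p - 2) * ‖1 - conj a * w‖ ^ (-p))
      = ∫⁻ w in unitDisk, ENNReal.ofReal ((1 - ‖w‖ ^ 2) ^ (p - 2) * ‖1 - ‖a‖ * w‖ ^ (-p)) := by
        rw [unitDisk, ← lintegral_ball_comp_circle_mul 1 (fun w =>
          ENNReal.ofReal ((1 - ‖w‖ ^ 2) ^ (p - 2) * ‖1 - ‖a‖ * w‖ ^ (-p))) u⁻¹]
        simp_rw [hconj, norm_mul ((u⁻¹ : Circle) : ℂ), Circle.norm_coe, one_mul]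
    _ ≤ _ := lintegral_unitDisk_norm_one_sub_ofReal_mul_rpow_neg_le hp (norm_nonneg a) ha1
    _ ≤ _ := by
        rw [mul_assoc _ (1 + _)]
        gcongr
        linarith [log_one_div_le_log_two_div (norm_nonneg a) ha1]

end ForelliRudin

section DirichletSpace

variable {p α : ℝ} {f : ℂ → ℂ}

lemma dirichletLintegral_eq (hp : 0 ≤ p) :
    dirichletLintegral p α f = ENNReal.ofReal π⁻¹ *
      ∫⁻ w in unitDisk, ENNReal.ofReal ((1 - ‖w‖ ^ 2) ^ α) * ‖deriv f w‖ₑ ^ p := by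
  rw [dirichletLintegral, areaMeasure, Measure.restrict_smul, lintegral_smul_measure, smul_eq_mul]
  congr 1
  refine lintegral_congr fun w => ?_
  rw [mul_comm, ENNReal.ofReal_mul' (by positivity),
    ← ENNReal.ofReal_rpow_of_nonneg (norm_nonneg _) hp, ofReal_norm]

lemma dirichletNorm_nonneg : 0 ≤ dirichletNorm p α f := by
  unfold dirichletNorm
  positivity

lemma norm_apply_zero_le_dirichletNorm (hp : 0 < p) : ‖f 0‖ ≤ dirichletNorm p α f := by
  calc ‖f 0‖ = (‖f 0‖ ^ p) ^ (1 / p) := by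
        rw [one_div, Real.rpow_rpow_inv (norm_nonneg _) hp.ne']
    _ ≤ dirichletNorm p α f := by
        unfold dirichletNorm
        gcongr
        exact le_add_of_nonneg_right ENNReal.toReal_nonneg

lemma toReal_dirichletLintegral_rpow_le_dirichletNorm (hp : 0 < p) :
    (dirichletLintegral p α f).toReal ^ (1 / p) ≤ dirichletNorm p α f := by
  unfold dirichletNorm
  gcongr
  exact le_add_of_nonneg_left (by positivity)

lemma dirichletLintegral_const_mul (hp : 0 ≤ p) (c : ℂ) :
    dirichletLintegral p α (fun w => c * f w) = ‖c‖ₑ ^ p * dirichletLintegral p α f := by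
  have hc : ‖c‖ₑ ^ p ≠ ⊤ := ENNReal.rpow_ne_top_of_nonneg hp enorm_ne_top
  rw [dirichletLintegral_eq hp, dirichletLintegral_eq hp, mul_left_comm,
    ← lintegral_const_mul' _ _ hc]
  simp_rw [deriv_const_mul_field, enorm_mul, ENNReal.mul_rpow_of_nonneg _ _ hp,
    mul_left_comm (‖c‖ₑ ^ p)]

lemma MemDirichlet.const_mul (hp : 0 ≤ p) (hf : MemDirichlet p α f) (c : ℂ) :
    MemDirichlet p α fun w => c * f w := by
  refine ⟨hf.1.const_mul c, ?_⟩
  rw [dirichletLintegral_const_mul hp]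
  exact ENNReal.mul_lt_top (ENNReal.rpow_lt_top_of_nonneg hp enorm_ne_top) hf.2

lemma dirichletNorm_const_mul (hp : 0 < p) (c : ℂ) :
    dirichletNorm p α (fun w => c * f w) = ‖c‖ * dirichletNorm p α f := by
  rw [dirichletNorm, dirichletLintegral_const_mul hp.le, norm_mul, ENNReal.toReal_mul,
    ← ENNReal.toReal_rpow, toReal_enorm, Real.mul_rpow (norm_nonneg _) (norm_nonneg _), ← mul_add,
    Real.mul_rpow (by positivity) (by positivity), one_div,
    Real.rpow_rpow_inv (norm_nonneg _) hp.ne', dirichletNorm, one_div]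

end DirichletSpace

section PointEvaluation

variable {p α : ℝ} {f : ℂ → ℂ} {z : ℂ}

/-- The norm `‖δ_z‖` of the functional `f ↦ f z` on `D^p_α`, as the supremum of `‖f z‖` over the
closed unit ball. -/
def pointEvalNorm (p α : ℝ) (z : ℂ) : ℝ :=
  sSup {r : ℝ | ∃ f : ℂ → ℂ, MemDirichlet p α f ∧ dirichletNorm p α f ≤ 1 ∧ r = ‖f z‖}

lemma pointEvalNorm_le {B : ℝ} (hB : 0 ≤ B)
    (h : ∀ f, MemDirichlet p α f → ‖f z‖ ≤ B * dirichletNorm p α f) : pointEvalNorm p α z ≤ B := by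
  refine Real.sSup_le ?_ hB
  rintro _ ⟨f, hf, hf1, rfl⟩
  exact (h f hf).trans (mul_le_of_le_one_right hB hf1)

lemma norm_apply_div_le_pointEvalNorm {B N : ℝ} (hp : 0 < p) (hB : 0 ≤ B)
    (h : ∀ f, MemDirichlet p α f → ‖f z‖ ≤ B * dirichletNorm p α f)
    (hf : MemDirichlet p α f) (hN : 0 < N) (hfN : dirichletNorm p α f ≤ N) :
    ‖f z‖ / N ≤ pointEvalNorm p α z := by
  have hNinv : ‖((N⁻¹ : ℝ) : ℂ)‖ = N⁻¹ := Complex.norm_of_nonneg (by positivity)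
  refine le_csSup ⟨B, ?_⟩ ⟨fun w => (N⁻¹ : ℝ) * f w, hf.const_mul hp.le _, ?_, ?_⟩
  · rintro _ ⟨g, hg, hg1, rfl⟩
    exact (h g hg).trans (mul_le_of_le_one_right hB hg1)
  · rw [dirichletNorm_const_mul hp, hNinv, inv_mul_le_one₀ hN]
    exact hfN
  · rw [norm_mul, hNinv, div_eq_inv_mul]

lemma norm_sub_apply_zero_le (hp : 1 < p) (hf : MemDirichlet p (p - 2) f) (hz : z ∈ unitDisk) :
    ‖f z - f 0‖ ≤ (16 / 3 * 3 ^ |p - 3|) ^ (1 / p) *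
      (dirichletLintegral p (p - 2) f).toReal ^ (1 / p) *
        Real.log (2 / (1 - ‖z‖ ^ 2)) ^ ((p - 1) / p) := by
  have hp0 : 0 < p := by linarith
  have he : 0 ≤ (p - 1) / p := div_nonneg (by linarith) hp0.le
  have hz1 : ‖z‖ < 1 := mem_ball_zero_iff.1 hz
  have hL := log_two_div_pos (norm_nonneg z) hz1
  set D := (dirichletLintegral p (p - 2) f).toReal
  have hDeq : ENNReal.ofReal D = dirichletLintegral p (p - 2) f := ENNReal.ofReal_toReal hf.2.ne
  obtain ⟨u, hu⟩ := exists_circle_eq_norm_mul z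
  have hradius : ∫⁻ s in Ioo (0 : ℝ) 1, ENNReal.ofReal ((1 - s) ^ (p - 1)) *
      ‖deriv f (s * u)‖ₑ ^ p ≤ ENNReal.ofReal (16 / 3 * 3 ^ |p - 3| * D) := by
    have hembed := lintegral_radius_rpow_le (p - 2) u hp.le (hf.1.deriv isOpen_ball)
    rw [show p - 2 + 1 = p - 1 by ring, show p - 2 - 1 = p - 3 by ring] at hembed
    refine hembed.trans_eq ?_
    rw [ENNReal.ofReal_mul (q := D) (by positivity), hDeq, dirichletLintegral_eq hp0.le,
      ← mul_assoc, ← ENNReal.ofReal_mul (by positivity)]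
    ring_nf
  have hmeas : AEMeasurable (fun s : ℝ => ‖deriv f (s * u)‖ₑ) (volume.restrict (Ioc 0 ‖z‖)) :=
    ((measurable_deriv f).comp (by fun_prop)).enorm.aemeasurable
  refine (ENNReal.ofReal_le_ofReal_iff (by positivity)).1 ?_
  calc ENNReal.ofReal ‖f z - f 0‖ = ‖f (‖z‖ * u) - f 0‖ₑ := by rw [ofReal_norm, ← hu]
    _ ≤ ∫⁻ s in Ioc 0 ‖z‖, ‖deriv f (s * u)‖ₑ :=
        enorm_sub_le_lintegral_radius hf.1 u (norm_nonneg z) hz1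
    _ ≤ _ := lintegral_Ioc_le_rpow_mul_log_rpow hp (norm_nonneg z) hz1 hmeas
    _ ≤ ENNReal.ofReal (16 / 3 * 3 ^ |p - 3| * D) ^ (1 / p) *
          ENNReal.ofReal (Real.log (2 / (1 - ‖z‖ ^ 2))) ^ ((p - 1) / p) := by
        gcongr ?_ ^ (1 / p) * ENNReal.ofReal ?_ ^ ((p - 1) / p)
        exact log_one_div_le_log_two_div (norm_nonneg z) hz1
    _ = _ := by
        rw [ENNReal.ofReal_rpow_of_nonneg (by positivity) (by positivity),
          ENNReal.ofReal_rpow_of_nonneg hL.le he, ← ENNReal.ofReal_mul (by positivity),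
          Real.mul_rpow (by positivity) (by positivity)]

lemma exists_norm_apply_le_mul_dirichletNorm (hp : 1 < p) :
    ∃ C > 0, ∀ z ∈ unitDisk, ∀ f, MemDirichlet p (p - 2) f →
      ‖f z‖ ≤ C * Real.log (2 / (1 - ‖z‖ ^ 2)) ^ ((p - 1) / p) * dirichletNorm p (p - 2) f := by
  have hp0 : 0 < p := by linarith
  have hlog2 : 0 < Real.log 2 := Real.log_pos one_lt_two
  set K : ℝ := (16 / 3 * 3 ^ |p - 3|) ^ (1 / p)
  set e := (p - 1) / p
  refine ⟨K + (Real.log 2 ^ e)⁻¹, by positivity, fun z hz f hf => ?_⟩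
  have hz1 : ‖z‖ < 1 := mem_ball_zero_iff.1 hz
  have hL := log_two_div_pos (norm_nonneg z) hz1
  have hconst : 1 ≤ (Real.log 2 ^ e)⁻¹ * Real.log (2 / (1 - ‖z‖ ^ 2)) ^ e := by
    rw [← div_eq_inv_mul, one_le_div (by positivity)]
    exact Real.rpow_le_rpow hlog2.le (log_two_le_log_two_div (norm_nonneg z) hz1)
      (div_nonneg (by linarith) hp0.le)
  set L := Real.log (2 / (1 - ‖z‖ ^ 2))
  set N := dirichletNorm p (p - 2) f
  have hN : 0 ≤ N := dirichletNorm_nonneg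
  calc ‖f z‖ ≤ ‖f z - f 0‖ + ‖f 0‖ := by simpa using norm_add_le (f z - f 0) (f 0)
    _ ≤ K * N * L ^ e + 1 * N := by
        rw [one_mul]
        refine add_le_add ((norm_sub_apply_zero_le hp hf hz).trans ?_)
          (norm_apply_zero_le_dirichletNorm hp0)
        gcongr
        exact toReal_dirichletLintegral_rpow_le_dirichletNorm hp0
    _ ≤ K * N * L ^ e + (Real.log 2 ^ e)⁻¹ * L ^ e * N := by gcongr
    _ = (K + (Real.log 2 ^ e)⁻¹) * L ^ e * N := by ring

end PointEvaluation

section LogKernel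

variable {p : ℝ} {a w : ℂ}

/-- The test function `w ↦ log (2 / (1 - conj a * w))` for the lower bound on `‖δ_a‖`. -/
def logKernel (a w : ℂ) : ℂ := Real.log 2 - Complex.log (1 - conj a * w)

lemma norm_logKernel_zero : ‖logKernel a 0‖ = Real.log 2 := by
  rw [logKernel, mul_zero, sub_zero, Complex.log_one, sub_zero,
    Complex.norm_of_nonneg (Real.log_nonneg one_le_two)]

lemma norm_logKernel_self (ha : a ∈ unitDisk) :
    ‖logKernel a a‖ = Real.log (2 / (1 - ‖a‖ ^ 2)) := by
  have ha1 : ‖a‖ < 1 := mem_ball_zero_iff.1 ha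
  have hpos : 0 < 1 - ‖a‖ ^ 2 := by nlinarith [norm_nonneg a]
  have hreal : 1 - conj a * a = ((1 - ‖a‖ ^ 2 : ℝ) : ℂ) := by
    rw [Complex.conj_mul']
    push_cast
    ring
  rw [logKernel, hreal, ← Complex.ofReal_log hpos.le, ← Complex.ofReal_sub,
    ← Real.log_div two_ne_zero hpos.ne',
    Complex.norm_of_nonneg (log_two_div_pos (norm_nonneg a) ha1).le]

lemma hasDerivAt_logKernel (ha : a ∈ unitDisk) (hw : w ∈ unitDisk) :
    HasDerivAt (logKernel a) (conj a / (1 - conj a * w)) w := by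
  have ha1 : ‖a‖ < 1 := mem_ball_zero_iff.1 ha
  have hw1 : ‖w‖ < 1 := mem_ball_zero_iff.1 hw
  have hlt : ‖-(conj a * w)‖ < 1 := by
    rw [norm_neg, norm_mul, RCLike.norm_conj]
    exact mul_lt_one_of_nonneg_of_lt_one_left (norm_nonneg a) ha1 hw1.le
  have hslit : 1 - conj a * w ∈ Complex.slitPlane := by
    rw [sub_eq_add_neg]
    exact Complex.mem_slitPlane_of_norm_lt_one hlt
  have hinner : HasDerivAt (fun w => 1 - conj a * w) (-conj a) w := by
    simpa using ((hasDerivAt_id w).const_mul (conj a)).const_sub 1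
  have hlog := (hinner.clog hslit).const_sub (Real.log 2 : ℂ)
  rwa [neg_div, neg_neg] at hlog

lemma exists_dirichletLintegral_logKernel_le (hp : 1 < p) :
    ∃ C > 0, ∀ a ∈ unitDisk, dirichletLintegral p (p - 2) (logKernel a) ≤
      ENNReal.ofReal (C * Real.log (2 / (1 - ‖a‖ ^ 2))) := by
  have hp0 : 0 < p := by linarith
  obtain ⟨C, hC, hkernel⟩ := exists_lintegral_unitDisk_norm_one_sub_conj_mul_rpow_neg_le hp
  refine ⟨π⁻¹ * C, by positivity, fun a ha => ?_⟩
  have ha1 : ‖a‖ < 1 := mem_ball_zero_iff.1 ha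
  rw [dirichletLintegral_eq hp0.le, mul_assoc, ENNReal.ofReal_mul (by positivity)]
  gcongr
  refine le_trans (setLIntegral_mono' measurableSet_ball fun w hw => ?_) (hkernel a ha)
  have hw1 : ‖w‖ < 1 := mem_ball_zero_iff.1 hw
  have hw2 : 0 ≤ 1 - ‖w‖ ^ 2 := by nlinarith [norm_nonneg w]
  rw [(hasDerivAt_logKernel ha hw).deriv, ← ofReal_norm,
    ENNReal.ofReal_rpow_of_nonneg (by positivity) hp0.le, ← ENNReal.ofReal_mul (by positivity)]
  gcongr
  calc ‖conj a / (1 - conj a * w)‖ ^ p ≤ (‖1 - conj a * w‖⁻¹) ^ p := by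
        rw [norm_div, RCLike.norm_conj, div_eq_mul_inv]
        gcongr
        exact mul_le_of_le_one_left (by positivity) ha1.le
    _ = ‖1 - conj a * w‖ ^ (-p) := by
        rw [Real.inv_rpow (norm_nonneg _), Real.rpow_neg (norm_nonneg _)]

lemma exists_dirichletNorm_logKernel_le (hp : 1 < p) :
    ∃ M > 0, ∀ a ∈ unitDisk, MemDirichlet p (p - 2) (logKernel a) ∧
      dirichletNorm p (p - 2) (logKernel a) ≤
        (M * Real.log (2 / (1 - ‖a‖ ^ 2))) ^ (1 / p) := by
  have hlog2 : 0 < Real.log 2 := Real.log_pos one_lt_two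
  obtain ⟨C, hC, hbound⟩ := exists_dirichletLintegral_logKernel_le hp
  refine ⟨Real.log 2 ^ (p - 1) + C, by positivity, fun a ha => ⟨⟨fun w hw =>
    (hasDerivAt_logKernel ha hw).differentiableAt.differentiableWithinAt,
    (hbound a ha).trans_lt ENNReal.ofReal_lt_top⟩, ?_⟩⟩
  have ha1 : ‖a‖ < 1 := mem_ball_zero_iff.1 ha
  have hL := log_two_div_pos (norm_nonneg a) ha1
  have hzero : ‖logKernel a 0‖ ^ p ≤
      Real.log 2 ^ (p - 1) * Real.log (2 / (1 - ‖a‖ ^ 2)) := by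
    calc ‖logKernel a 0‖ ^ p = Real.log 2 ^ (p - 1) * Real.log 2 := by
          rw [norm_logKernel_zero, ← Real.rpow_add_one hlog2.ne', sub_add_cancel]
      _ ≤ _ := mul_le_mul_of_nonneg_left (log_two_le_log_two_div (norm_nonneg a) ha1)
          (by positivity)
  rw [dirichletNorm, add_mul]
  gcongr
  exact ENNReal.toReal_le_of_le_ofReal (by positivity) (hbound a ha)

end LogKernel

/-- Lemma 2.1(2): for `p = α + 2`, the point evaluation functional on `D^p_α` satisfies
`‖δ_z‖ ≍ (log(2/(1-|z|²)))^{(p-1)/p}`. -/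
theorem pointEval_dirichlet_critical (p α : ℝ) (hα : -1 < α) (hp : 0 < p)
    (hpα : p = α + 2) :
    ∃ c C : ℝ, 0 < c ∧ 0 < C ∧ ∀ z ∈ unitDisk,
      c * (Real.log (2 / (1 - ‖z‖ ^ 2))) ^ ((p - 1) / p) ≤
        sSup {r : ℝ | ∃ f : ℂ → ℂ, MemDirichlet p α f ∧ dirichletNorm p α f ≤ 1 ∧ r = ‖f z‖} ∧
      sSup {r : ℝ | ∃ f : ℂ → ℂ, MemDirichlet p α f ∧ dirichletNorm p α f ≤ 1 ∧ r = ‖f z‖} ≤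
        C * (Real.log (2 / (1 - ‖z‖ ^ 2))) ^ ((p - 1) / p) := by
  obtain rfl : α = p - 2 := by linarith
  have hp1 : 1 < p := by linarith
  obtain ⟨C, hC, hupper⟩ := exists_norm_apply_le_mul_dirichletNorm hp1
  obtain ⟨M, hM, hlower⟩ := exists_dirichletNorm_logKernel_le hp1
  refine ⟨M ^ (-(1 / p)), C, by positivity, hC, fun z hz => ?_⟩
  have hL := log_two_div_pos (norm_nonneg z) (mem_ball_zero_iff.1 hz)
  have hkernel := norm_logKernel_self hz
  obtain ⟨hmem, hnorm⟩ := hlower z hz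
  set L := Real.log (2 / (1 - ‖z‖ ^ 2))
  have hB : 0 ≤ C * L ^ ((p - 1) / p) := by positivity
  refine ⟨?_, pointEvalNorm_le hB (hupper z hz)⟩
  calc M ^ (-(1 / p)) * L ^ ((p - 1) / p) = ‖logKernel z z‖ / (M * L) ^ (1 / p) := by
        rw [hkernel, Real.mul_rpow hM.le hL.le, Real.rpow_neg hM.le, sub_div, div_self hp.ne',
          Real.rpow_sub hL, Real.rpow_one]
        field_simp
    _ ≤ pointEvalNorm p (p - 2) z :=
        norm_apply_div_le_pointEvalNorm hp hB (hupper z hz) hmem (by positivity) hnorm
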